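/- Uniform gap between logarithmic derivatives of the eigenfunctions (Lemma 6.3): Let μ ≥ 1 and a, r : ℝ → ℝ continuous with 1/μ ≤ a(x) ≤ μ and |r(x)| ≤ μ for all x, let γ > γ̲, and let φ_γ and φ̃_γ be generalized principal eigenfunctions. Then there exists ε > 0 such that φ̃_γ'(x)/φ̃_γ(x) ≥ φ_γ'(x)/φ_γ(x) + ε for all x ∈ ℝ. -/

import Mathlib

open MeasureTheory Filter

/-- The generalized principal eigenvalue `γ̲`: the supremum over nonzero compactly
supported `C¹` functions `φ` of the Rayleigh quotient
`(∫ (r φ² − a (φ')²))/(∫ φ²)`. -/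
noncomputable def gammaBar (a r : ℝ → ℝ) : ℝ :=
  sSup {c : ℝ | ∃ φ : ℝ → ℝ, ContDiff ℝ 1 φ ∧ HasCompactSupport φ ∧ φ ≠ 0 ∧
    c = (∫ x : ℝ, (r x * φ x ^ 2 - a x * deriv φ x ^ 2)) / ∫ x : ℝ, φ x ^ 2}

/-- A generalized principal eigenfunction `φ` (with explicit derivative `φ'`):
positive, `φ(0) = 1`, `(aφ')' + (r − γ)φ = 0` pointwise, and `φ → 0` along the
filter `l` (`atTop` for `φ_γ`, `atBot` for `φ̃_γ`). -/
def IsGenPrincEig (a r : ℝ → ℝ) (γ : ℝ) (l : Filter ℝ) (φ φ' : ℝ → ℝ) : Prop :=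
  (∀ x, 0 < φ x) ∧ φ 0 = 1 ∧
  (∀ x, HasDerivAt φ (φ' x) x) ∧
  (∀ x, HasDerivAt (fun y => a y * φ' y) ((γ - r x) * φ x) x) ∧
  Tendsto φ l (nhds 0)

/-!
Let `φ` decay at `+∞` and `ψ` at `-∞`. Their weighted Wronskian `W = a (φ ψ' - φ' ψ)` is constant
and the gap `ψ' / ψ - φ' / φ` equals `W / (a φ ψ)`, so the claim is that `φ ψ / W`, the Green
function on the diagonal, is bounded. Since `γ̲ < γ`, the energy `∫ (a (u')² + (γ - r) u²)`
dominates the `H¹` norm, hence by the one-dimensional Sobolev inequality every `u(y)²`. Apply this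
to the smooth minimum `u = t φ ψ / (t φ + ψ)` with `t = ψ(y) / φ(y)`: it is bounded,
`u(y) = ψ(y) / 2`, and its energy is at most `W t / 3`, because with `h = ψ / φ` one has
`u = φ · t h / (h + t)`, `a φ² h' = W`, and the ground state substitution turns the energy into an
integral in `h`.
-/

/-- The pair `(φ, φ')` is a solution on `ℝ` of the Sturm–Liouville equation `(a φ')' = c φ`. As in
`IsGenPrincEig` the derivative is explicit; there `c = γ - r`. -/
structure IsSturmLiouvilleSolution (a c φ φ' : ℝ → ℝ) : Prop where
  hasDerivAt : ∀ x, HasDerivAt φ (φ' x) x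
  hasDerivAt_flux : ∀ x, HasDerivAt (fun y => a y * φ' y) (c x * φ x) x

/-- The quadratic form `∫ (a (u')² + c u²)` of the operator `u ↦ -(a u')' + c u`. -/
noncomputable def sturmLiouvilleEnergy (a c u : ℝ → ℝ) : ℝ :=
  ∫ x, (a x * deriv u x ^ 2 + c x * u x ^ 2)

/-- The energy controls point values: `u(y)² ≤ C · energy(u)` for every test function `u` and every
point `y`, which says that the Green function of `u ↦ -(a u')' + c u` is at most `C` on the
diagonal. -/
def IsPointwiseCoercive (a c : ℝ → ℝ) (C : ℝ) : Prop :=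
  ∀ u : ℝ → ℝ, ContDiff ℝ 1 u → HasCompactSupport u →
    ∀ y, u y ^ 2 ≤ C * sturmLiouvilleEnergy a c u

/-- The weighted Wronskian `a (φ ψ' - φ' ψ)` of the pairs `(φ, φ')` and `(ψ, ψ')`. -/
def weightedWronskian (a φ φ' ψ ψ' : ℝ → ℝ) (x : ℝ) : ℝ :=
  a x * (φ x * ψ' x - φ' x * ψ x)

/-- A smooth substitute for the minimum of two positive numbers, half their harmonic mean; it takes
the junk value `0` where `s + t = 0`. -/
noncomputable def smoothMin (s t : ℝ) : ℝ :=
  s * t / (s + t)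

theorem hasCompactSupport_sq {X : Type*} [TopologicalSpace X] {u : X → ℝ}
    (hsupp : HasCompactSupport u) : HasCompactSupport fun x => u x ^ 2 :=
  hsupp.comp_left (g := fun t : ℝ => t ^ 2) (zero_pow two_ne_zero)

theorem integrable_mul_sq {w u : ℝ → ℝ} (hw : Continuous w) (hu : Continuous u)
    (hsupp : HasCompactSupport u) : Integrable fun x => w x * u x ^ 2 :=
  (hw.mul (hu.pow 2)).integrable_of_hasCompactSupport (hasCompactSupport_sq hsupp).mul_left

theorem integrable_sq {u : ℝ → ℝ} (hu : Continuous u) (hsupp : HasCompactSupport u) :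
    Integrable fun x => u x ^ 2 :=
  (hu.pow 2).integrable_of_hasCompactSupport (hasCompactSupport_sq hsupp)

theorem integral_sq_pos {u : ℝ → ℝ} (hu : Continuous u) (hsupp : HasCompactSupport u)
    (hne : u ≠ 0) : 0 < ∫ x, u x ^ 2 := by
  obtain ⟨z, hz⟩ := Function.ne_iff.1 hne
  have hz_sq : u z ^ 2 ≠ 0 := pow_ne_zero 2 hz
  exact (hu.pow 2).integral_pos_of_hasCompactSupport_nonneg_nonzero
    (hasCompactSupport_sq hsupp) (fun x => sq_nonneg (u x)) hz_sq

theorem sq_le_integral_sq_add_integral_deriv_sq {u : ℝ → ℝ} (hu : ContDiff ℝ 1 u)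
    (hsupp : HasCompactSupport u) (y : ℝ) :
    u y ^ 2 ≤ (∫ x, u x ^ 2) + ∫ x, deriv u x ^ 2 := by
  have hderiv : deriv (fun x => u x ^ 2) = fun x => 2 * u x * deriv u x := by
    funext x
    simpa using ((hu.differentiable one_ne_zero x).hasDerivAt.fun_pow 2).deriv
  have hsq_supp := hasCompactSupport_sq hsupp
  have hint : Integrable fun x => u x ^ 2 + deriv u x ^ 2 :=
    (integrable_sq hu.continuous hsupp).add
      (integrable_sq (hu.continuous_deriv le_rfl) hsupp.deriv)
  have hint_deriv : Integrable (deriv fun x => u x ^ 2) :=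
    ((hu.pow 2).continuous_deriv le_rfl).integrable_of_hasCompactSupport hsq_supp.deriv
  calc u y ^ 2 = ∫ x in Set.Iic y, deriv (fun x => u x ^ 2) x :=
        (HasCompactSupport.integral_Iic_deriv_eq (hu.pow 2) hsq_supp y).symm
    _ ≤ ∫ x in Set.Iic y, (u x ^ 2 + deriv u x ^ 2) :=
        setIntegral_mono hint_deriv.integrableOn hint.integrableOn fun x => by
          rw [hderiv]
          exact two_mul_le_add_sq (u x) (deriv u x)
    _ ≤ ∫ x, (u x ^ 2 + deriv u x ^ 2) :=
        setIntegral_le_integral hint (.of_forall fun x => by positivity)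
    _ = (∫ x, u x ^ 2) + ∫ x, deriv u x ^ 2 :=
        integral_add (integrable_sq hu.continuous hsupp)
          (integrable_sq (hu.continuous_deriv le_rfl) hsupp.deriv)

theorem bddAbove_image_Ici {α : Type*} [LinearOrder α] [TopologicalSpace α] [CompactIccSpace α]
    {f : α → ℝ} (hf : Continuous f) (hbdd : IsBoundedUnder (· ≤ ·) atTop f) (b : α) :
    BddAbove (f '' Set.Ici b) := by
  obtain ⟨K, hK⟩ := hbdd
  have : Nonempty α := ⟨b⟩
  obtain ⟨X, hX⟩ := eventually_atTop.1 (eventually_map.1 hK)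
  refine ((isCompact_Icc.bddAbove_image hf.continuousOn).union bddAbove_Iic).mono
    (t := f '' Set.Icc b X ∪ Set.Iic K) ?_
  rintro _ ⟨x, hx, rfl⟩
  exact (le_total x X).imp (fun h => ⟨x, ⟨hx, h⟩, rfl⟩) (hX x)

theorem exists_forall_le_of_bddAbove_image {φ ψ u : ℝ → ℝ} {t : ℝ} (ht : 0 ≤ t)
    (hφ : BddAbove (φ '' Set.Ici 0)) (hψ : BddAbove (ψ '' Set.Iic 0))
    (huφ : ∀ x, 0 ≤ x → u x ≤ t * φ x) (huψ : ∀ x, x ≤ 0 → u x ≤ ψ x) :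
    ∃ K, ∀ x, u x ≤ K := by
  obtain ⟨K₁, hK₁⟩ := hφ
  obtain ⟨K₂, hK₂⟩ := hψ
  refine ⟨max (t * K₁) K₂, fun x => ?_⟩
  rcases le_total 0 x with hx | hx
  · exact le_max_of_le_left <| (huφ x hx).trans <|
      mul_le_mul_of_nonneg_left (hK₁ ⟨x, hx, rfl⟩) ht
  · exact le_max_of_le_right <| (huψ x hx).trans (hK₂ ⟨x, hx, rfl⟩)

section Energy

variable {a r c : ℝ → ℝ}

theorem integral_rayleigh_le {M : ℝ} {u : ℝ → ℝ} (ha : Continuous a) (hr : Continuous r)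
    (ha_nonneg : ∀ x, 0 ≤ a x) (hr_le : ∀ x, r x ≤ M) (hu : ContDiff ℝ 1 u)
    (hsupp : HasCompactSupport u) :
    ∫ x, (r x * u x ^ 2 - a x * deriv u x ^ 2) ≤ M * ∫ x, u x ^ 2 := by
  rw [← integral_const_mul]
  refine integral_mono ((integrable_mul_sq hr hu.continuous hsupp).sub
    (integrable_mul_sq ha (hu.continuous_deriv le_rfl) hsupp.deriv))
    ((integrable_sq hu.continuous hsupp).const_mul M) fun x => ?_
  have hpot := mul_le_mul_of_nonneg_right (hr_le x) (sq_nonneg (u x))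
  have hkin := mul_nonneg (ha_nonneg x) (sq_nonneg (deriv u x))
  dsimp only
  linarith

theorem integral_rayleigh_le_gammaBar_mul {M : ℝ} {u : ℝ → ℝ} (ha : Continuous a)
    (hr : Continuous r) (ha_nonneg : ∀ x, 0 ≤ a x) (hr_le : ∀ x, r x ≤ M)
    (hu : ContDiff ℝ 1 u) (hsupp : HasCompactSupport u) :
    ∫ x, (r x * u x ^ 2 - a x * deriv u x ^ 2) ≤ gammaBar a r * ∫ x, u x ^ 2 := by
  rcases eq_or_ne u 0 with rfl | hne
  · simp
  rw [← div_le_iff₀ (integral_sq_pos hu.continuous hsupp hne)]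
  refine le_csSup ⟨M, ?_⟩ ⟨u, hu, hsupp, hne, rfl⟩
  rintro _ ⟨v, hv, hvsupp, hvne, rfl⟩
  rw [div_le_iff₀ (integral_sq_pos hv.continuous hvsupp hvne)]
  exact integral_rayleigh_le ha hr ha_nonneg hr_le hv hvsupp

theorem sturmLiouvilleEnergy_eq_add {u : ℝ → ℝ} (ha : Continuous a) (hc : Continuous c)
    (hu : ContDiff ℝ 1 u) (hsupp : HasCompactSupport u) :
    sturmLiouvilleEnergy a c u = (∫ x, a x * deriv u x ^ 2) + ∫ x, c x * u x ^ 2 :=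
  integral_add (integrable_mul_sq ha (hu.continuous_deriv le_rfl) hsupp.deriv)
    (integrable_mul_sq hc hu.continuous hsupp)

theorem sub_gammaBar_mul_integral_sq_le_energy {M γ : ℝ} {u : ℝ → ℝ} (ha : Continuous a)
    (hr : Continuous r) (ha_nonneg : ∀ x, 0 ≤ a x) (hr_le : ∀ x, r x ≤ M)
    (hu : ContDiff ℝ 1 u) (hsupp : HasCompactSupport u) :
    (γ - gammaBar a r) * ∫ x, u x ^ 2 ≤ sturmLiouvilleEnergy a (fun x => γ - r x) u := by
  have hint : Integrable fun x => r x * u x ^ 2 - a x * deriv u x ^ 2 :=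
    (integrable_mul_sq hr hu.continuous hsupp).sub
      (integrable_mul_sq ha (hu.continuous_deriv le_rfl) hsupp.deriv)
  have henergy : sturmLiouvilleEnergy a (fun x => γ - r x) u
      = γ * (∫ x, u x ^ 2) - ∫ x, (r x * u x ^ 2 - a x * deriv u x ^ 2) := by
    rw [← integral_const_mul, ← integral_sub
      ((integrable_sq hu.continuous hsupp).const_mul γ) hint]
    exact integral_congr_ae (.of_forall fun x => by ring)
  linarith [integral_rayleigh_le_gammaBar_mul ha hr ha_nonneg hr_le hu hsupp]

theorem integral_deriv_sq_le_energy {l L δ : ℝ} {u : ℝ → ℝ} (ha : Continuous a)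
    (hc : Continuous c) (hl : 0 < l) (hL : 0 ≤ L) (hδ : 0 < δ) (hla : ∀ x, l ≤ a x)
    (hLc : ∀ x, -L ≤ c x) (hu : ContDiff ℝ 1 u) (hsupp : HasCompactSupport u)
    (hcoercive : δ * ∫ x, u x ^ 2 ≤ sturmLiouvilleEnergy a c u) :
    ∫ x, deriv u x ^ 2 ≤ (1 + L / δ) / l * sturmLiouvilleEnergy a c u := by
  have hint_sq := integrable_sq hu.continuous hsupp
  have hint_deriv := integrable_sq (hu.continuous_deriv le_rfl) hsupp.deriv
  have hkin : l * ∫ x, deriv u x ^ 2 ≤ ∫ x, a x * deriv u x ^ 2 := by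
    rw [← integral_const_mul]
    exact integral_mono (hint_deriv.const_mul l)
      (integrable_mul_sq ha (hu.continuous_deriv le_rfl) hsupp.deriv)
      fun x => mul_le_mul_of_nonneg_right (hla x) (sq_nonneg _)
  have hpot : -L * ∫ x, u x ^ 2 ≤ ∫ x, c x * u x ^ 2 := by
    rw [← integral_const_mul]
    exact integral_mono (hint_sq.const_mul (-L)) (integrable_mul_sq hc hu.continuous hsupp)
      fun x => mul_le_mul_of_nonneg_right (hLc x) (sq_nonneg _)
  have hmass : L * ∫ x, u x ^ 2 ≤ L / δ * sturmLiouvilleEnergy a c u := by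
    rw [div_mul_eq_mul_div, mul_div_assoc]
    exact mul_le_mul_of_nonneg_left ((le_div_iff₀' hδ).2 hcoercive) hL
  rw [div_mul_eq_mul_div, le_div_iff₀' hl]
  linarith [sturmLiouvilleEnergy_eq_add ha hc hu hsupp]

theorem isPointwiseCoercive_of_mul_integral_sq_le {l L δ : ℝ} (ha : Continuous a)
    (hc : Continuous c) (hl : 0 < l) (hL : 0 ≤ L) (hδ : 0 < δ) (hla : ∀ x, l ≤ a x)
    (hLc : ∀ x, -L ≤ c x)
    (hcoercive : ∀ u : ℝ → ℝ, ContDiff ℝ 1 u → HasCompactSupport u →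
      δ * ∫ x, u x ^ 2 ≤ sturmLiouvilleEnergy a c u) :
    IsPointwiseCoercive a c (1 / δ + (1 + L / δ) / l) := by
  intro u hu hsupp y
  have hmass : ∫ x, u x ^ 2 ≤ 1 / δ * sturmLiouvilleEnergy a c u := by
    rw [one_div_mul_eq_div, le_div_iff₀' hδ]
    exact hcoercive u hu hsupp
  have hkin := integral_deriv_sq_le_energy ha hc hl hL hδ hla hLc hu hsupp (hcoercive u hu hsupp)
  linarith [sq_le_integral_sq_add_integral_deriv_sq hu hsupp y]

theorem exists_isPointwiseCoercive_of_gammaBar_lt {l M γ : ℝ} (ha : Continuous a)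
    (hr : Continuous r) (hl : 0 < l) (hla : ∀ x, l ≤ a x) (hr_le : ∀ x, r x ≤ M)
    (hγ : gammaBar a r < γ) :
    ∃ C, 0 < C ∧ IsPointwiseCoercive a (fun x => γ - r x) C := by
  have hδ : 0 < γ - gammaBar a r := sub_pos.2 hγ
  refine ⟨_, ?_, isPointwiseCoercive_of_mul_integral_sq_le ha (continuous_const.sub hr) hl
    (abs_nonneg (M - γ)) hδ hla (fun x => ?_) fun u hu hsupp =>
      sub_gammaBar_mul_integral_sq_le_energy ha hr (fun x => hl.le.trans (hla x)) hr_le hu hsupp⟩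
  · positivity
  · linarith [le_abs_self (M - γ), hr_le x]

end Energy

namespace IsSturmLiouvilleSolution

variable {a c φ φ' : ℝ → ℝ}

theorem deriv_eq (hφ : IsSturmLiouvilleSolution a c φ φ') : deriv φ = φ' :=
  funext fun x => (hφ.hasDerivAt x).deriv

theorem contDiff (hφ : IsSturmLiouvilleSolution a c φ φ') (ha : Continuous a)
    (ha_ne : ∀ x, a x ≠ 0) : ContDiff ℝ 1 φ := by
  have hflux : Continuous fun x => a x * φ' x :=
    continuous_iff_continuousAt.2 fun x => (hφ.hasDerivAt_flux x).continuousAt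
  refine contDiff_one_iff_deriv.2 ⟨fun x => (hφ.hasDerivAt x).differentiableAt, ?_⟩
  rw [hφ.deriv_eq]
  exact (hflux.div ha ha_ne).congr fun x => mul_div_cancel_left₀ _ (ha_ne x)

/-- The ground state substitution: `a (vφ)'² + c (vφ)²` and `a (v'φ)²` differ by the derivative of
`a φ' v² φ`. -/
theorem energy_mul_eq (hφ : IsSturmLiouvilleSolution a c φ φ') (ha : Continuous a)
    (ha_ne : ∀ x, a x ≠ 0) (hc : Continuous c) {v : ℝ → ℝ} (hv : ContDiff ℝ 1 v)
    (hsupp : HasCompactSupport v) :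
    sturmLiouvilleEnergy a c (fun x => v x * φ x) = ∫ x, a x * (deriv v x * φ x) ^ 2 := by
  have hφC := hφ.contDiff ha ha_ne
  have hv_deriv : ∀ x, HasDerivAt v (deriv v x) x :=
    fun x => (hv.differentiable one_ne_zero x).hasDerivAt
  have hu := hv.mul hφC
  have hu_supp : HasCompactSupport fun x => v x * φ x := hsupp.mul_right
  have hu_deriv : ∀ x, HasDerivAt (fun x => v x * φ x) (deriv v x * φ x + v x * φ' x) x :=
    fun x => (hv_deriv x).mul (hφ.hasDerivAt x)
  have hint_energy : Integrable fun x =>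
      a x * deriv (fun x => v x * φ x) x ^ 2 + c x * (v x * φ x) ^ 2 :=
    (integrable_mul_sq ha (hu.continuous_deriv le_rfl) hu_supp.deriv).add
      (integrable_mul_sq hc hu.continuous hu_supp)
  have hint_v : Integrable fun x => a x * (deriv v x * φ x) ^ 2 :=
    integrable_mul_sq ha ((hv.continuous_deriv le_rfl).mul hφC.continuous) hsupp.deriv.mul_right
  have hboundary_deriv : ∀ x, HasDerivAt (fun x => (a x * φ' x) * (v x * (v x * φ x)))
      (a x * deriv (fun x => v x * φ x) x ^ 2 + c x * (v x * φ x) ^ 2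
        - a x * (deriv v x * φ x) ^ 2) x := fun x => by
    refine ((hφ.hasDerivAt_flux x).fun_mul ((hv_deriv x).fun_mul (hu_deriv x))).congr_deriv ?_
    rw [(hu_deriv x).deriv]
    ring
  have hint_boundary : Integrable fun x => (a x * φ' x) * (v x * (v x * φ x)) :=
    Continuous.integrable_of_hasCompactSupport
      (continuous_iff_continuousAt.2 fun x => (hboundary_deriv x).continuousAt)
      hsupp.mul_right.mul_left
  rw [← sub_eq_zero, sturmLiouvilleEnergy, ← integral_sub hint_energy hint_v]
  exact integral_eq_zero_of_hasDerivAt_of_integrable hboundary_deriv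
    (hint_energy.sub hint_v) hint_boundary

end IsSturmLiouvilleSolution

theorem exists_contDiff_cutoff : ∃ C : ℝ, ∀ R : ℝ, 0 < R → ∃ η : ℝ → ℝ,
    ContDiff ℝ 1 η ∧ (∀ x, η x ∈ Set.Icc 0 1) ∧ (∀ x, |x| ≤ R → η x = 1) ∧
    tsupport η ⊆ Set.Icc (-(2 * R)) (2 * R) ∧ ∀ x, |deriv η x| ≤ C / R := by
  let θ : ContDiffBump (0 : ℝ) := ⟨1, 2, by norm_num, by norm_num⟩
  have hθ : ContDiff ℝ 1 θ := θ.contDiff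
  obtain ⟨C, hC⟩ :=
    (hθ.continuous_deriv le_rfl).bounded_above_of_compact_support θ.hasCompactSupport.deriv
  refine ⟨C, fun R hR => ⟨fun x => θ (x / R), hθ.comp (contDiff_id.div_const R),
    fun x => ⟨θ.nonneg, θ.le_one⟩, fun x hx => ?_, ?_, fun x => ?_⟩⟩
  · apply θ.one_of_mem_closedBall
    rwa [mem_closedBall_zero_iff, Real.norm_eq_abs, abs_div, abs_of_pos hR, div_le_one hR]
  · refine closure_minimal (fun x hx => ?_) isClosed_Icc
    by_contra hout
    refine hx (θ.zero_of_le_dist ?_)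
    rw [dist_zero_right, Real.norm_eq_abs, abs_div, abs_of_pos hR, le_div_iff₀ hR]
    by_contra! hlt
    exact hout (abs_le.1 hlt.le)
  · have hθ_deriv : HasDerivAt (θ : ℝ → ℝ) (deriv θ (x / R)) (x / R) :=
      (hθ.differentiable one_ne_zero (x / R)).hasDerivAt
    have hderiv : HasDerivAt (fun x => θ (x / R)) (deriv θ (x / R) * (1 / R)) x :=
      HasDerivAt.comp (h₂ := θ) x hθ_deriv ((hasDerivAt_id x).div_const R)
    rw [hderiv.deriv, abs_mul, abs_of_pos (one_div_pos.2 hR), mul_one_div]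
    gcongr
    exact hC _

section Testing

variable {a c φ φ' χ : ℝ → ℝ} {A B C K : ℝ}

theorem mul_sq_deriv_mul_cutoff_le {η : ℝ → ℝ} {D x : ℝ} (ha_nonneg : 0 ≤ a x) (ha_le : a x ≤ A)
    (hη : DifferentiableAt ℝ η x) (hχ : DifferentiableAt ℝ χ x) (hη_mem : η x ∈ Set.Icc 0 1)
    (hη_deriv : |deriv η x| ≤ D) (hK : |χ x * φ x| ≤ K) :
    a x * (deriv (fun x => η x * χ x) x * φ x) ^ 2
      ≤ 2 * A * (K * D) ^ 2 + 2 * (a x * (deriv χ x * φ x) ^ 2) := by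
  have hcross : |χ x * φ x * deriv η x| ≤ K * D := by
    rw [abs_mul]
    exact mul_le_mul hK hη_deriv (abs_nonneg _) ((abs_nonneg _).trans hK)
  have hcross_sq : a x * (χ x * φ x * deriv η x) ^ 2 ≤ A * (K * D) ^ 2 :=
    mul_le_mul ha_le (sq_le_sq' (abs_le.1 hcross).1 (abs_le.1 hcross).2) (sq_nonneg _)
      (ha_nonneg.trans ha_le)
  have hmain_sq : η x ^ 2 * (a x * (deriv χ x * φ x) ^ 2) ≤ a x * (deriv χ x * φ x) ^ 2 :=
    mul_le_of_le_one_left (by positivity) (pow_le_one₀ hη_mem.1 hη_mem.2)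
  rw [(hη.hasDerivAt.fun_mul hχ.hasDerivAt).deriv]
  calc a x * ((deriv η x * χ x + η x * deriv χ x) * φ x) ^ 2
      = a x * (χ x * φ x * deriv η x + η x * (deriv χ x * φ x)) ^ 2 := by ring
    _ ≤ a x * (2 * ((χ x * φ x * deriv η x) ^ 2 + (η x * (deriv χ x * φ x)) ^ 2)) := by
        gcongr
        exact add_sq_le
    _ = 2 * (a x * (χ x * φ x * deriv η x) ^ 2)
          + 2 * (η x ^ 2 * (a x * (deriv χ x * φ x) ^ 2)) := by ring
    _ ≤ 2 * A * (K * D) ^ 2 + 2 * (a x * (deriv χ x * φ x) ^ 2) := by linarith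

theorem integral_mul_sq_deriv_mul_cutoff_le {η : ℝ → ℝ} {D R : ℝ} (ha : Continuous a)
    (ha_nonneg : ∀ x, 0 ≤ a x) (ha_le : ∀ x, a x ≤ A) (hφ : Continuous φ)
    (hχ : ContDiff ℝ 1 χ) (hK : ∀ x, |χ x * φ x| ≤ K) (hR : 0 < R) (hη : ContDiff ℝ 1 η)
    (hη_mem : ∀ x, η x ∈ Set.Icc 0 1) (hη_supp : tsupport η ⊆ Set.Icc (-(2 * R)) (2 * R))
    (hη_deriv : ∀ x, |deriv η x| ≤ D / R) :
    ∫ x, a x * (deriv (fun x => η x * χ x) x * φ x) ^ 2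
      ≤ 8 * A * (K * D) ^ 2 / R
        + 2 * ∫ x in Set.Icc (-(2 * R)) (2 * R), a x * (deriv χ x * φ x) ^ 2 := by
  have hχ'_cont : Continuous (deriv χ) := hχ.continuous_deriv le_rfl
  have hηχ'_cont : Continuous (deriv fun x => η x * χ x) := (hη.mul hχ).continuous_deriv le_rfl
  have hvanish : ∀ x, x ∉ Set.Icc (-(2 * R)) (2 * R) →
      a x * (deriv (fun x => η x * χ x) x * φ x) ^ 2 = 0 := fun x hx => by
    have hderiv_zero : deriv (fun x => η x * χ x) x = 0 := by
      by_contra hne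
      exact hx (hη_supp (tsupport_mul_subset_left (support_deriv_subset hne)))
    simp [hderiv_zero]
  have hint : IntegrableOn (fun x => a x * (deriv χ x * φ x) ^ 2)
      (Set.Icc (-(2 * R)) (2 * R)) :=
    (ha.mul ((hχ'_cont.mul hφ).pow 2)).integrableOn_Icc
  have hint_const : IntegrableOn (fun _ : ℝ => 2 * A * (K * (D / R)) ^ 2)
      (Set.Icc (-(2 * R)) (2 * R)) := continuous_const.integrableOn_Icc
  have hvol : volume.real (Set.Icc (-(2 * R)) (2 * R)) = 4 * R := by
    rw [Real.volume_real_Icc_of_le (by linarith)]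
    ring
  calc ∫ x, a x * (deriv (fun x => η x * χ x) x * φ x) ^ 2
      = ∫ x in Set.Icc (-(2 * R)) (2 * R), a x * (deriv (fun x => η x * χ x) x * φ x) ^ 2 :=
        (setIntegral_eq_integral_of_forall_compl_eq_zero hvanish).symm
    _ ≤ ∫ x in Set.Icc (-(2 * R)) (2 * R),
          (2 * A * (K * (D / R)) ^ 2 + 2 * (a x * (deriv χ x * φ x) ^ 2)) :=
        setIntegral_mono (ha.mul ((hηχ'_cont.mul hφ).pow 2)).integrableOn_Icc
          (hint_const.add (hint.const_mul 2)) fun x =>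
            mul_sq_deriv_mul_cutoff_le (ha_nonneg x) (ha_le x) (hη.differentiable one_ne_zero x)
              (hχ.differentiable one_ne_zero x) (hη_mem x) (hη_deriv x) (hK x)
    _ = 8 * A * (K * D) ^ 2 / R
          + 2 * ∫ x in Set.Icc (-(2 * R)) (2 * R), a x * (deriv χ x * φ x) ^ 2 := by
        rw [integral_add hint_const (hint.const_mul 2), setIntegral_const, integral_const_mul,
          hvol, smul_eq_mul]
        generalize ∫ x in Set.Icc (-(2 * R)) (2 * R), a x * (deriv χ x * φ x) ^ 2 = I
        field_simp
        ring

/-- Pointwise coercivity applies to `χ φ` although this function need not have compact support: for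
cut-offs `η` at scale `R`, the part of the energy of `η χ φ` that contains `η'` is `O(1 / R)`. -/
theorem IsPointwiseCoercive.sq_mul_solution_le (hC : IsPointwiseCoercive a c C) (hC_nonneg : 0 ≤ C)
    (hφ : IsSturmLiouvilleSolution a c φ φ') (ha : Continuous a) (hc : Continuous c)
    (ha_pos : ∀ x, 0 < a x) (ha_le : ∀ x, a x ≤ A) (hχ : ContDiff ℝ 1 χ)
    (hK : ∀ x, |χ x * φ x| ≤ K)
    (hB : ∀ R, 0 < R → ∫ x in Set.Icc (-R) R, a x * (deriv χ x * φ x) ^ 2 ≤ B) (y : ℝ) :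
    (χ y * φ y) ^ 2 ≤ 2 * C * B := by
  obtain ⟨D, hcutoff⟩ := exists_contDiff_cutoff
  have ha_ne := fun x => (ha_pos x).ne'
  have hφC := hφ.contDiff ha ha_ne
  have hbound : ∀ R, max 1 |y| ≤ R →
      (χ y * φ y) ^ 2 ≤ C * (8 * A * (K * D) ^ 2 / R + 2 * B) := fun R hRy => by
    have hR : 0 < R := zero_lt_one.trans_le ((le_max_left _ _).trans hRy)
    obtain ⟨η, hη, hη_mem, hη_one, hη_supp, hη_deriv⟩ := hcutoff R hR
    have hsupp : HasCompactSupport fun x => η x * χ x :=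
      HasCompactSupport.mul_right (isCompact_Icc.of_isClosed_subset (isClosed_tsupport η) hη_supp)
    calc (χ y * φ y) ^ 2 = (η y * χ y * φ y) ^ 2 := by
          rw [hη_one y ((le_max_right _ _).trans hRy), one_mul]
      _ ≤ C * sturmLiouvilleEnergy a c fun x => η x * χ x * φ x :=
          hC _ ((hη.mul hχ).mul hφC) hsupp.mul_right y
      _ = C * ∫ x, a x * (deriv (fun x => η x * χ x) x * φ x) ^ 2 := by
          rw [hφ.energy_mul_eq ha ha_ne hc (hη.mul hχ) hsupp]
      _ ≤ C * (8 * A * (K * D) ^ 2 / R + 2 * B) := by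
          refine mul_le_mul_of_nonneg_left ?_ hC_nonneg
          linarith [integral_mul_sq_deriv_mul_cutoff_le ha (fun x => (ha_pos x).le) ha_le
            hφC.continuous hχ hK hR hη hη_mem hη_supp hη_deriv, hB (2 * R) (by positivity)]
  have hlim : Tendsto (fun R : ℝ => C * (8 * A * (K * D) ^ 2 / R + 2 * B)) atTop
      (nhds (C * (0 + 2 * B))) :=
    ((tendsto_const_nhds.div_atTop tendsto_id).add_const _).const_mul C
  calc (χ y * φ y) ^ 2 ≤ C * (0 + 2 * B) :=
        ge_of_tendsto hlim ((eventually_ge_atTop _).mono hbound)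
    _ = 2 * C * B := by ring

theorem IsPointwiseCoercive.eq_zero_of_bounded_solution (hC : IsPointwiseCoercive a c C)
    (hC_nonneg : 0 ≤ C) (hφ : IsSturmLiouvilleSolution a c φ φ') (ha : Continuous a)
    (hc : Continuous c) (ha_pos : ∀ x, 0 < a x) (ha_le : ∀ x, a x ≤ A)
    (hK : ∀ x, |φ x| ≤ K) (y : ℝ) : φ y = 0 := by
  have hsq : (1 * φ y) ^ 2 ≤ 2 * C * 0 :=
    hC.sq_mul_solution_le (χ := fun _ => 1) hC_nonneg hφ ha hc ha_pos ha_le contDiff_const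
      (by simpa only [one_mul] using hK) (by simp) y
  simpa using hsq

end Testing

section SmoothMin

variable {s t : ℝ}

theorem smoothMin_pos (hs : 0 < s) (ht : 0 < t) : 0 < smoothMin s t :=
  div_pos (mul_pos hs ht) (add_pos hs ht)

theorem smoothMin_le_left (hs : 0 ≤ s) (ht : 0 ≤ t) : smoothMin s t ≤ s :=
  div_le_of_le_mul₀ (add_nonneg hs ht) hs
    (mul_le_mul_of_nonneg_left (le_add_of_nonneg_left hs) hs)

theorem smoothMin_le_right (hs : 0 ≤ s) (ht : 0 ≤ t) : smoothMin s t ≤ t :=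
  div_le_of_le_mul₀ (add_nonneg hs ht) ht <|
    (mul_comm s t).trans_le (mul_le_mul_of_nonneg_left (le_add_of_nonneg_right ht) ht)

theorem smoothMin_self (t : ℝ) : smoothMin t t = t / 2 := by
  rcases eq_or_ne t 0 with rfl | ht
  · simp [smoothMin]
  · rw [smoothMin, ← two_mul, mul_div_mul_right _ _ ht]

theorem contDiff_smoothMin_const {h : ℝ → ℝ} {n : WithTop ℕ∞} (hh : ContDiff ℝ n h)
    (hne : ∀ x, h x + t ≠ 0) : ContDiff ℝ n fun x => smoothMin (h x) t :=
  (hh.mul contDiff_const).div (hh.add contDiff_const) hne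

theorem hasDerivAt_smoothMin_const {h : ℝ → ℝ} {h' x : ℝ} (hh : HasDerivAt h h' x)
    (hne : h x + t ≠ 0) :
    HasDerivAt (fun x => smoothMin (h x) t) (t ^ 2 * h' / (h x + t) ^ 2) x :=
  ((hh.mul_const t).fun_div (hh.add_const t) hne).congr_deriv (by ring)

end SmoothMin

section Wronskian

variable {a c φ φ' ψ ψ' : ℝ → ℝ} {A C W : ℝ}

theorem IsSturmLiouvilleSolution.exists_weightedWronskian_eq
    (hφ : IsSturmLiouvilleSolution a c φ φ') (hψ : IsSturmLiouvilleSolution a c ψ ψ') :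
    ∃ W, ∀ x, weightedWronskian a φ φ' ψ ψ' x = W := by
  have hderiv : ∀ x, HasDerivAt (weightedWronskian a φ φ' ψ ψ') 0 x := fun x => by
    refine ((((hφ.hasDerivAt x).mul (hψ.hasDerivAt_flux x)).sub
      ((hφ.hasDerivAt_flux x).mul (hψ.hasDerivAt x))).congr_deriv (by ring)).congr_of_eventuallyEq
      (.of_forall fun y => ?_)
    simp only [weightedWronskian, Pi.sub_apply, Pi.mul_apply]
    ring
  exact ⟨_, fun x => is_const_of_deriv_eq_zero (fun y => (hderiv y).differentiableAt)
    (fun y => (hderiv y).deriv) x 0⟩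

theorem IsSturmLiouvilleSolution.hasDerivAt_div (hφ : IsSturmLiouvilleSolution a c φ φ')
    (hψ : IsSturmLiouvilleSolution a c ψ ψ') {x : ℝ} (ha_ne : a x ≠ 0) (hφ_ne : φ x ≠ 0) :
    HasDerivAt (fun x => ψ x / φ x) (weightedWronskian a φ φ' ψ ψ' x / (a x * φ x ^ 2)) x := by
  refine ((hψ.hasDerivAt x).div (hφ.hasDerivAt x) hφ_ne).congr_deriv ?_
  rw [weightedWronskian]
  field_simp

theorem div_sub_div_eq_weightedWronskian_div {x : ℝ} (ha_ne : a x ≠ 0)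
    (hφ_ne : φ x ≠ 0) (hψ_ne : ψ x ≠ 0) :
    ψ' x / ψ x - φ' x / φ x = weightedWronskian a φ φ' ψ ψ' x / (a x * φ x * ψ x) := by
  rw [weightedWronskian]
  field_simp

/-- If `W ≤ 0` then `ψ / φ` is nonincreasing, so that on `Iic 0` the function `φ` is dominated by a
multiple of `ψ`; it would then be a bounded solution on all of `ℝ`. -/
theorem IsPointwiseCoercive.weightedWronskian_pos (hC : IsPointwiseCoercive a c C)
    (hC_nonneg : 0 ≤ C) (hφ : IsSturmLiouvilleSolution a c φ φ')
    (hψ : IsSturmLiouvilleSolution a c ψ ψ') (ha : Continuous a) (hc : Continuous c)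
    (ha_pos : ∀ x, 0 < a x) (ha_le : ∀ x, a x ≤ A) (hφ_pos : ∀ x, 0 < φ x)
    (hψ_pos : ∀ x, 0 < ψ x) (hφ_bdd : BddAbove (φ '' Set.Ici 0))
    (hψ_bdd : BddAbove (ψ '' Set.Iic 0)) (hW : ∀ x, weightedWronskian a φ φ' ψ ψ' x = W) :
    0 < W := by
  by_contra! hW_nonpos
  have hratio_deriv : ∀ x, HasDerivAt (fun x => ψ x / φ x) (W / (a x * φ x ^ 2)) x :=
    fun x => hW x ▸ hφ.hasDerivAt_div hψ (ha_pos x).ne' (hφ_pos x).ne'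
  have hanti : Antitone fun x => ψ x / φ x := by
    refine antitone_of_deriv_nonpos (fun x => (hratio_deriv x).differentiableAt) fun x => ?_
    rw [(hratio_deriv x).deriv]
    exact div_nonpos_of_nonpos_of_nonneg hW_nonpos
      (mul_nonneg (ha_pos x).le (sq_nonneg _))
  have ht : 0 < ψ 0 / φ 0 := div_pos (hψ_pos 0) (hφ_pos 0)
  obtain ⟨K, hK⟩ := exists_forall_le_of_bddAbove_image ht.le hφ_bdd hψ_bdd
    (u := fun x => ψ 0 / φ 0 * φ x) (fun x _ => le_rfl)
    fun x hx => (le_div_iff₀ (hφ_pos x)).1 (hanti hx)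
  refine (hφ_pos 0).ne' (hC.eq_zero_of_bounded_solution hC_nonneg hφ ha hc ha_pos ha_le
    (K := K / (ψ 0 / φ 0)) (fun x => ?_) 0)
  rw [abs_of_pos (hφ_pos x), le_div_iff₀' ht]
  exact hK x

theorem setIntegral_mul_deriv_div_add_pow_le {h : ℝ → ℝ} {t x y : ℝ} (hh : ContDiff ℝ 1 h)
    (hh_pos : ∀ x, 0 < h x) (ht : 0 < t) (hxy : x ≤ y) :
    ∫ z in Set.Icc x y, t ^ 4 * deriv h z / (h z + t) ^ 4 ≤ t / 3 := by
  have hsum_pos : ∀ z, 0 < h z + t := fun z => add_pos (hh_pos z) ht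
  have hprimitive : ∀ z, HasDerivAt (fun z => -(t ^ 4 / 3) * ((h z + t) ^ 3)⁻¹)
      (t ^ 4 * deriv h z / (h z + t) ^ 4) z := fun z => by
    have hne := (hsum_pos z).ne'
    have hsum_deriv := (hh.differentiable one_ne_zero z).hasDerivAt.add_const t
    refine (((hsum_deriv.fun_pow 3).fun_inv (pow_ne_zero 3 hne)).const_mul _).congr_deriv ?_
    field_simp
    norm_num
  have hcont : Continuous fun z => t ^ 4 * deriv h z / (h z + t) ^ 4 :=
    (continuous_const.mul (hh.continuous_deriv le_rfl)).div
      ((hh.continuous.add_const t).pow 4) fun z => (pow_pos (hsum_pos z) 4).ne'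
  have hleft : t ^ 4 / 3 * ((h x + t) ^ 3)⁻¹ ≤ t ^ 4 / 3 * (t ^ 3)⁻¹ := by
    gcongr
    linarith [hh_pos x]
  have hright : 0 ≤ t ^ 4 / 3 * ((h y + t) ^ 3)⁻¹ :=
    mul_nonneg (by positivity) (inv_nonneg.2 (pow_pos (hsum_pos y) 3).le)
  rw [integral_Icc_eq_integral_Ioc, ← intervalIntegral.integral_of_le hxy,
    intervalIntegral.integral_eq_sub_of_hasDerivAt (fun z _ => hprimitive z)
      (hcont.intervalIntegrable _ _)]
  calc -(t ^ 4 / 3) * ((h y + t) ^ 3)⁻¹ - -(t ^ 4 / 3) * ((h x + t) ^ 3)⁻¹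
      ≤ t ^ 4 / 3 * (t ^ 3)⁻¹ := by linarith
    _ = t / 3 := by field_simp

theorem IsSturmLiouvilleSolution.setIntegral_smoothMin_le
    (hφ : IsSturmLiouvilleSolution a c φ φ') (hψ : IsSturmLiouvilleSolution a c ψ ψ')
    (ha : Continuous a) (ha_pos : ∀ x, 0 < a x) (hφ_pos : ∀ x, 0 < φ x) (hψ_pos : ∀ x, 0 < ψ x)
    (hW : ∀ x, weightedWronskian a φ φ' ψ ψ' x = W) (hW_nonneg : 0 ≤ W) {t x y : ℝ} (ht : 0 < t)
    (hxy : x ≤ y) :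
    ∫ z in Set.Icc x y,
      a z * (deriv (fun x => smoothMin (ψ x / φ x) t) z * φ z) ^ 2 ≤ W * (t / 3) := by
  have ha_ne := fun x => (ha_pos x).ne'
  have hratio_pos : ∀ x, 0 < ψ x / φ x := fun x => div_pos (hψ_pos x) (hφ_pos x)
  have hratio : ContDiff ℝ 1 fun x => ψ x / φ x :=
    (hψ.contDiff ha ha_ne).div (hφ.contDiff ha ha_ne) fun x => (hφ_pos x).ne'
  have hintegrand : ∀ z, a z * (deriv (fun x => smoothMin (ψ x / φ x) t) z * φ z) ^ 2
      = W * (t ^ 4 * deriv (fun x => ψ x / φ x) z / (ψ z / φ z + t) ^ 4) := fun z => by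
    have hratio_deriv := hφ.hasDerivAt_div hψ (ha_ne z) (hφ_pos z).ne'
    have hsum_ne := (add_pos (hratio_pos z) ht).ne'
    rw [(hasDerivAt_smoothMin_const hratio_deriv hsum_ne).deriv, hratio_deriv.deriv, hW z]
    generalize ψ z / φ z + t = s at hsum_ne
    have := ha_ne z
    have := (hφ_pos z).ne'
    field_simp
  simp_rw [hintegrand]
  rw [integral_const_mul]
  exact mul_le_mul_of_nonneg_left
    (setIntegral_mul_deriv_div_add_pow_le hratio hratio_pos ht hxy) hW_nonneg

theorem IsPointwiseCoercive.mul_le_mul_weightedWronskian (hC : IsPointwiseCoercive a c C)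
    (hC_nonneg : 0 ≤ C) (hφ : IsSturmLiouvilleSolution a c φ φ')
    (hψ : IsSturmLiouvilleSolution a c ψ ψ') (ha : Continuous a) (hc : Continuous c)
    (ha_pos : ∀ x, 0 < a x) (ha_le : ∀ x, a x ≤ A) (hφ_pos : ∀ x, 0 < φ x)
    (hψ_pos : ∀ x, 0 < ψ x) (hφ_bdd : BddAbove (φ '' Set.Ici 0))
    (hψ_bdd : BddAbove (ψ '' Set.Iic 0)) (hW : ∀ x, weightedWronskian a φ φ' ψ ψ' x = W)
    (hW_nonneg : 0 ≤ W) (y : ℝ) : φ y * ψ y ≤ 8 / 3 * C * W := by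
  have ha_ne := fun x => (ha_pos x).ne'
  have hratio_pos : ∀ x, 0 < ψ x / φ x := fun x => div_pos (hψ_pos x) (hφ_pos x)
  set t := ψ y / φ y with ht_def
  have ht : 0 < t := hratio_pos y
  have hratio : ContDiff ℝ 1 fun x => ψ x / φ x :=
    (hψ.contDiff ha ha_ne).div (hφ.contDiff ha ha_ne) fun x => (hφ_pos x).ne'
  have hχ : ContDiff ℝ 1 fun x => smoothMin (ψ x / φ x) t :=
    contDiff_smoothMin_const hratio fun x => (add_pos (hratio_pos x) ht).ne'
  have hu_le_φ : ∀ x, smoothMin (ψ x / φ x) t * φ x ≤ t * φ x := fun x =>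
    mul_le_mul_of_nonneg_right (smoothMin_le_right (hratio_pos x).le ht.le) (hφ_pos x).le
  have hu_le_ψ : ∀ x, smoothMin (ψ x / φ x) t * φ x ≤ ψ x := fun x =>
    (le_div_iff₀ (hφ_pos x)).1 (smoothMin_le_left (hratio_pos x).le ht.le)
  obtain ⟨K, hK⟩ := exists_forall_le_of_bddAbove_image ht.le hφ_bdd hψ_bdd
    (fun x _ => hu_le_φ x) fun x _ => hu_le_ψ x
  have hu_abs_le : ∀ x, |smoothMin (ψ x / φ x) t * φ x| ≤ K := fun x => by
    rw [abs_of_pos (mul_pos (smoothMin_pos (hratio_pos x) ht) (hφ_pos x))]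
    exact hK x
  have hu_y : smoothMin (ψ y / φ y) t * φ y = ψ y / 2 := by
    rw [smoothMin_self, div_mul_eq_mul_div, div_mul_cancel₀ _ (hφ_pos y).ne']
  have henergy := hC.sq_mul_solution_le hC_nonneg hφ ha hc ha_pos ha_le hχ hu_abs_le
    (fun R hR => hφ.setIntegral_smoothMin_le hψ ha ha_pos hφ_pos hψ_pos hW hW_nonneg ht
      (by linarith)) y
  rw [hu_y] at henergy
  refine le_of_mul_le_mul_right ?_ ht
  calc φ y * ψ y * t = 4 * (ψ y / 2) ^ 2 := by
        have := (hφ_pos y).ne'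
        rw [ht_def]
        field_simp
        norm_num
    _ ≤ 4 * (2 * C * (W * (t / 3))) := by gcongr
    _ = 8 / 3 * C * W * t := by ring

end Wronskian

theorem log_derivative_gap_general {a r φ φ' ψ ψ' : ℝ → ℝ} {l A M γ : ℝ} (ha : Continuous a)
    (hr : Continuous r) (hl : 0 < l) (hla : ∀ x, l ≤ a x) (ha_le : ∀ x, a x ≤ A)
    (hr_le : ∀ x, r x ≤ M) (hγ : gammaBar a r < γ)
    (hφ : IsSturmLiouvilleSolution a (fun x => γ - r x) φ φ')
    (hψ : IsSturmLiouvilleSolution a (fun x => γ - r x) ψ ψ')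
    (hφ_pos : ∀ x, 0 < φ x) (hψ_pos : ∀ x, 0 < ψ x)
    (hφ_bdd : IsBoundedUnder (· ≤ ·) atTop φ) (hψ_bdd : IsBoundedUnder (· ≤ ·) atBot ψ) :
    ∃ ε : ℝ, 0 < ε ∧ ∀ x : ℝ, φ' x / φ x + ε ≤ ψ' x / ψ x := by
  have ha_pos : ∀ x, 0 < a x := fun x => hl.trans_le (hla x)
  have ha_ne := fun x => (ha_pos x).ne'
  have hA : 0 < A := (ha_pos 0).trans_le (ha_le 0)
  have hc : Continuous fun x => γ - r x := continuous_const.sub hr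
  obtain ⟨C, hC_pos, hC⟩ := exists_isPointwiseCoercive_of_gammaBar_lt ha hr hl hla hr_le hγ
  obtain ⟨W, hW⟩ := hφ.exists_weightedWronskian_eq hψ
  have hφ_right := bddAbove_image_Ici (hφ.contDiff ha ha_ne).continuous hφ_bdd 0
  have hψ_left := bddAbove_image_Ici (α := ℝᵒᵈ) (hψ.contDiff ha ha_ne).continuous hψ_bdd 0
  have hW_pos : 0 < W := hC.weightedWronskian_pos hC_pos.le hφ hψ ha hc ha_pos ha_le
    hφ_pos hψ_pos hφ_right hψ_left hW
  refine ⟨W / (A * (8 / 3 * C * W)), by positivity, fun x => ?_⟩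
  have hprod := hC.mul_le_mul_weightedWronskian hC_pos.le hφ hψ ha hc ha_pos ha_le
    hφ_pos hψ_pos hφ_right hψ_left hW hW_pos.le x
  have hprod_pos := mul_pos (hφ_pos x) (hψ_pos x)
  rw [← le_sub_iff_add_le', div_sub_div_eq_weightedWronskian_div (ha_ne x)
    (hφ_pos x).ne' (hψ_pos x).ne', hW x, mul_assoc (a x)]
  exact div_le_div_of_nonneg_left hW_pos.le (mul_pos (ha_pos x) hprod_pos)
    (mul_le_mul (ha_le x) hprod hprod_pos.le hA.le)

/-- Lemma 6.3: uniform gap between the logarithmic derivatives of the two generalized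
principal eigenfunctions: there is `ε > 0` with
`φ̃_γ'/φ̃_γ ≥ φ_γ'/φ_γ + ε` on `ℝ`. -/
theorem log_derivative_gap (μ : ℝ) (hμ : 1 ≤ μ) (a r : ℝ → ℝ)
    (hac : Continuous a) (hrc : Continuous r)
    (ha : ∀ x, 1 / μ ≤ a x ∧ a x ≤ μ) (hr : ∀ x, |r x| ≤ μ)
    (γ : ℝ) (hγ : gammaBar a r < γ)
    (φ φ' φt φt' : ℝ → ℝ)
    (hφ : IsGenPrincEig a r γ Filter.atTop φ φ')
    (hφt : IsGenPrincEig a r γ Filter.atBot φt φt') :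
    ∃ ε : ℝ, 0 < ε ∧ ∀ x : ℝ, φ' x / φ x + ε ≤ φt' x / φt x := by
  obtain ⟨hφ_pos, -, hφ_deriv, hφ_flux, hφ_lim⟩ := hφ
  obtain ⟨hφt_pos, -, hφt_deriv, hφt_flux, hφt_lim⟩ := hφt
  exact log_derivative_gap_general hac hrc (one_div_pos.2 (zero_lt_one.trans_le hμ))
    (fun x => (ha x).1) (fun x => (ha x).2) (fun x => (abs_le.1 (hr x)).2) hγ
    ⟨hφ_deriv, hφ_flux⟩ ⟨hφt_deriv, hφt_flux⟩ hφ_pos hφt_pos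
    hφ_lim.isBoundedUnder_le hφt_lim.isBoundedUnder_le
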